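/- For every integer n ≥ 5 there exists a finite group G of order 3 · 2^n together with elements ρ0, ρ1, ρ2 that generate G, such that ρ0, ρ1, ρ2 and ρ0ρ2 have order exactly 2, ρ0ρ1 and ρ1ρ2 each have order exactly 6, and the triple (ρ0, ρ1, ρ2) satisfies the intersection property in G. -/

import Mathlib

/-- The intersection property for a triple of elements. -/
def InterProp {G : Type*} [Group G] (ρ : Fin 3 → G) : Prop :=
  ∀ I J : Set (Fin 3),
    Subgroup.closure (ρ '' I) ⊓ Subgroup.closure (ρ '' J) =
      Subgroup.closure (ρ '' (I ∩ J))

/-- `(G, (ρ0, ρ1, ρ2))` is a string C-group of order `3 · 2^n` with Schläfli type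
`{6, 6}`. -/
def IsType66StringC (n : ℕ) (G : Type) [Group G] (ρ0 ρ1 ρ2 : G) : Prop :=
  Nat.card G = 3 * 2 ^ n ∧
  Subgroup.closure {ρ0, ρ1, ρ2} = ⊤ ∧
  orderOf ρ0 = 2 ∧ orderOf ρ1 = 2 ∧ orderOf ρ2 = 2 ∧
  orderOf (ρ0 * ρ2) = 2 ∧
  orderOf (ρ0 * ρ1) = 6 ∧ orderOf (ρ1 * ρ2) = 6 ∧
  InterProp ![ρ0, ρ1, ρ2]

/-!
Three involutive affine maps `gen0`, `gen1`, `gen2` of `ℤ³` have linear parts generating all `48`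
signed permutations of the coordinates, and satisfy the relations of type `{6, 6}`. A parity
invariant shows that the translations in the group `Γ` they generate are exactly those by `2ℤ³`.
If a lattice `L` is invariant under the signed permutations, then dividing `Γ` by the translations
of `2L` leaves a group of order `48 [ℤ³ : L]`. The primitive, face-centred and body-centred cubic
lattices together with their dyadic multiples supply an `L` of index `2 ^ k` for each `k`.

On linear parts the intersection property fails only because `(gen0 * gen1) ^ 3` and
`(gen1 * gen2) ^ 3` both become `-1`. These two maps differ by the translation by twice a unit
vector, which survives in the quotient as soon as `L ≠ ℤ³`.
-/

open Equiv Multiplicative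
open scoped Pointwise

section DihedralIntersections

variable {G : Type*} [Group G]

theorem exists_zpow_mul_pow_of_mem_closure_pair {a b x : G} (ha : a * a = 1) (hb : b * b = 1)
    (hx : x ∈ Subgroup.closure {a, b}) : ∃ (i : ℤ) (e : Fin 2), x = (a * b) ^ i * a ^ e.val := by
  have ha_inv : a⁻¹ = a := inv_eq_of_mul_eq_one_left ha
  have hb_inv : b⁻¹ = b := inv_eq_of_mul_eq_one_left hb
  have mul_gen : ∀ y ∈ ({a, b} : Set G), ∀ x : G,
      (∃ (i : ℤ) (e : Fin 2), x = (a * b) ^ i * a ^ e.val) →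
      ∃ (i : ℤ) (e : Fin 2), x * y = (a * b) ^ i * a ^ e.val := by
    rintro y (rfl | rfl) x ⟨i, e, rfl⟩ <;> fin_cases e
    · exact ⟨i, 1, by simp⟩
    · exact ⟨i, 0, by simp [mul_assoc, ha]⟩
    · exact ⟨i - 1, 1, by simp [zpow_sub_one, mul_assoc, ha_inv, hb_inv, ha]⟩
    · exact ⟨i + 1, 0, by simp [zpow_add_one, mul_assoc]⟩
  induction hx using Subgroup.closure_induction_right with
  | one => exact ⟨0, 0, by simp⟩
  | mul_right x _ y hy ih => exact mul_gen y hy x ih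
  | mul_inv_cancel x _ y hy ih =>
    have hy_inv : y⁻¹ = y := by rcases hy with rfl | rfl <;> assumption
    rw [hy_inv]
    exact mul_gen y hy x ih

theorem exists_pow_mul_pow_of_mem_closure_pair {a b x : G} {k : ℕ} [NeZero k] (ha : a * a = 1)
    (hb : b * b = 1) (hk : (a * b) ^ k = 1) (hx : x ∈ Subgroup.closure {a, b}) :
    ∃ (i : Fin k) (e : Fin 2), x = (a * b) ^ i.val * a ^ e.val := by
  obtain ⟨i, e, rfl⟩ := exists_zpow_mul_pow_of_mem_closure_pair ha hb hx
  have hk_pos : (0 : ℤ) < k := by exact_mod_cast NeZero.pos k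
  have hi_nonneg := Int.emod_nonneg i hk_pos.ne'
  have hi_lt := Int.emod_lt_of_pos i hk_pos
  refine ⟨⟨(i % k).toNat, by omega⟩, e, ?_⟩
  rw [← zpow_natCast (a * b) (i % k).toNat, Int.toNat_of_nonneg hi_nonneg,
    ← zpow_eq_zpow_emod i (by exact_mod_cast hk)]

theorem closure_pair_inf_closure_pair_le {a b c : G} {k l : ℕ} [NeZero k] [NeZero l]
    (ha : a * a = 1) (hb : b * b = 1) (hc : c * c = 1)
    (hk : (a * b) ^ k = 1) (hl : (a * c) ^ l = 1)
    (hinj : ∀ (i : Fin k) (j : Fin l) (d e : Fin 2),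
      (a * b) ^ i.val * a ^ d.val = (a * c) ^ j.val * a ^ e.val → i = 0) :
    Subgroup.closure {a, b} ⊓ Subgroup.closure {a, c} ≤ Subgroup.closure {a} := by
  rintro x ⟨hxb, hxc⟩
  obtain ⟨i, d, rfl⟩ := exists_pow_mul_pow_of_mem_closure_pair ha hb hk hxb
  obtain ⟨j, e, heq⟩ := exists_pow_mul_pow_of_mem_closure_pair ha hc hl hxc
  obtain rfl : i = 0 := hinj i j d e heq
  simpa using pow_mem (Subgroup.mem_closure_singleton_self a) _

theorem eq_one_or_eq_of_mem_closure_singleton {a x : G} (ha : a * a = 1)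
    (hx : x ∈ Subgroup.closure {a}) : x = 1 ∨ x = a := by
  rw [← Set.pair_eq_singleton] at hx
  obtain ⟨i, e, rfl⟩ := exists_zpow_mul_pow_of_mem_closure_pair ha ha hx
  fin_cases e <;> simp [ha]

theorem closure_singleton_inf_closure_singleton_le_bot {a b : G} (ha : a * a = 1)
    (hb : b * b = 1) (hab : a ≠ b) : Subgroup.closure {a} ⊓ Subgroup.closure {b} ≤ ⊥ := by
  rintro x ⟨hxa, hxb⟩
  rcases eq_one_or_eq_of_mem_closure_singleton ha hxa with rfl | rfl
  · exact one_mem _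
  · exact (eq_one_or_eq_of_mem_closure_singleton hb hxb).resolve_right hab

end DihedralIntersections

section IntersectionProperty

variable {G H : Type*} [Group G] [Group H]

theorem closure_image_inf_closure_image_le {ι : Type*} {ρ : ι → G} {i j k : ι} {I J : Set ι}
    (hI : I ⊆ {k, i}) (hJ : J ⊆ {k, j})
    (hpair : Subgroup.closure {ρ k, ρ i} ⊓ Subgroup.closure {ρ k, ρ j} ≤ Subgroup.closure {ρ k})
    (hki : Subgroup.closure {ρ k} ⊓ Subgroup.closure {ρ i} ≤ ⊥)
    (hkj : Subgroup.closure {ρ k} ⊓ Subgroup.closure {ρ j} ≤ ⊥) :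
    Subgroup.closure (ρ '' I) ⊓ Subgroup.closure (ρ '' J) ≤ Subgroup.closure (ρ '' (I ∩ J)) := by
  have hle : Subgroup.closure (ρ '' I) ⊓ Subgroup.closure (ρ '' J) ≤ Subgroup.closure {ρ k} :=
    calc Subgroup.closure (ρ '' I) ⊓ Subgroup.closure (ρ '' J)
        ≤ Subgroup.closure (ρ '' {k, i}) ⊓ Subgroup.closure (ρ '' {k, j}) := by gcongr
      _ ≤ Subgroup.closure {ρ k} := by simpa only [Set.image_pair] using hpair
  by_cases hkI : k ∈ I
  · by_cases hkJ : k ∈ J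
    · exact hle.trans (Subgroup.closure_mono (by simpa using ⟨k, ⟨hkI, hkJ⟩, rfl⟩))
    · have hJj : ρ '' J ⊆ {ρ j} := by
        simpa using Set.image_mono (f := ρ) ((Set.subset_insert_iff_of_notMem hkJ).1 hJ)
      exact (le_inf hle (inf_le_right.trans (Subgroup.closure_mono hJj))).trans
        (hkj.trans bot_le)
  · have hIi : ρ '' I ⊆ {ρ i} := by
      simpa using Set.image_mono (f := ρ) ((Set.subset_insert_iff_of_notMem hkI).1 hI)
    exact (le_inf hle (inf_le_left.trans (Subgroup.closure_mono hIi))).trans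
      (hki.trans bot_le)

theorem interProp_of_forall_lt {ρ : Fin 3 → G}
    (hpair : ∀ i j k, i < j → i ≠ k → j ≠ k →
      Subgroup.closure {ρ k, ρ i} ⊓ Subgroup.closure {ρ k, ρ j} ≤ Subgroup.closure {ρ k})
    (hsingle : ∀ i j, i ≠ j → Subgroup.closure {ρ i} ⊓ Subgroup.closure {ρ j} ≤ ⊥) :
    InterProp ρ := by
  intro I J
  refine le_antisymm ?_ (le_inf (Subgroup.closure_mono (Set.image_mono Set.inter_subset_left))
    (Subgroup.closure_mono (Set.image_mono Set.inter_subset_right)))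
  by_cases hIJ : I ⊆ J
  · rw [Set.inter_eq_left.2 hIJ]
    exact inf_le_left
  by_cases hJI : J ⊆ I
  · rw [Set.inter_eq_right.2 hJI]
    exact inf_le_right
  obtain ⟨i, hiI, hiJ⟩ := Set.not_subset.1 hIJ
  obtain ⟨j, hjJ, hjI⟩ := Set.not_subset.1 hJI
  wlog hij : i < j generalizing I J i j
  · have hji : j < i := lt_of_le_of_ne (not_lt.1 hij) fun h => hjI (h ▸ hiI)
    rw [inf_comm, Set.inter_comm]
    exact this J I hJI hIJ j hjJ hjI i hiI hiJ hji
  have exists_third : ∀ i j : Fin 3, i < j →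
      ∃ k, i ≠ k ∧ j ≠ k ∧ ∀ l, l = k ∨ l = i ∨ l = j := by decide
  obtain ⟨k, hik, hjk, hall⟩ := exists_third i j hij
  have hI : I ⊆ {k, i} := fun l hl => by
    rcases hall l with rfl | rfl | rfl <;> simp_all
  have hJ : J ⊆ {k, j} := fun l hl => by
    rcases hall l with rfl | rfl | rfl <;> simp_all
  exact closure_image_inf_closure_image_le hI hJ (hpair i j k hij hik hjk) (hsingle k i hik.symm)
    (hsingle k j hjk.symm)

theorem InterProp.of_map_injective {ρ : Fin 3 → G} {f : G →* H} (hf : Function.Injective f)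
    (h : InterProp (f ∘ ρ)) : InterProp ρ := by
  intro I J
  apply Subgroup.map_injective hf
  simp only [Subgroup.map_inf _ _ f hf, MonoidHom.map_closure, ← Set.image_comp]
  exact h I J

theorem orderOf_eq_of_orderOf_map {f : G →* H} {x : G} {n : ℕ} (hx : x ^ n = 1)
    (hfx : orderOf (f x) = n) : orderOf x = n :=
  Nat.dvd_antisymm (orderOf_dvd_of_pow_eq_one hx) (hfx ▸ orderOf_map_dvd f x)

end IntersectionProperty

theorem exists_isType66StringC_of_closure {K : Type} [Group K] {a b c : K} {n : ℕ}
    (hcard : Nat.card (Subgroup.closure {a, b, c}) = 3 * 2 ^ n)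
    (ha : orderOf a = 2) (hb : orderOf b = 2) (hc : orderOf c = 2) (hac : orderOf (a * c) = 2)
    (hab : orderOf (a * b) = 6) (hbc : orderOf (b * c) = 6) (hinter : InterProp ![a, b, c]) :
    ∃ (G : Type) (inst : Group G) (ρ0 ρ1 ρ2 : G),
      Finite G ∧ @IsType66StringC n G inst ρ0 ρ1 ρ2 := by
  let Γ := Subgroup.closure {a, b, c}
  let ρ0 : Γ := ⟨a, Subgroup.subset_closure (by simp)⟩
  let ρ1 : Γ := ⟨b, Subgroup.subset_closure (by simp)⟩
  let ρ2 : Γ := ⟨c, Subgroup.subset_closure (by simp)⟩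
  have hgen : Subgroup.closure {ρ0, ρ1, ρ2} = ⊤ := by
    apply Subgroup.map_injective Γ.subtype_injective
    rw [MonoidHom.map_closure, ← MonoidHom.range_eq_map, Subgroup.range_subtype]
    simp [Γ, Set.image_insert_eq, ρ0, ρ1, ρ2]
  have hinter' : InterProp ![ρ0, ρ1, ρ2] :=
    InterProp.of_map_injective Γ.subtype_injective (by convert hinter; ext i; fin_cases i <;> rfl)
  refine ⟨Γ, inferInstance, ρ0, ρ1, ρ2, Nat.finite_of_card_ne_zero (by simp [Γ, hcard]),
    hcard, hgen, ?_, ?_, ?_, ?_, ?_, ?_, hinter'⟩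
  all_goals rw [← Subgroup.orderOf_coe]; assumption

section SignedAffine

open SemidirectProduct

-- The derived `DecidableEq` instance goes through a cast on which `decide` gets stuck.
local instance {N G : Type*} [Group N] [Group G] {φ : G →* MulAut N} [DecidableEq N]
    [DecidableEq G] : DecidableEq (N ⋊[φ] G) := fun _ _ =>
  decidable_of_iff _ SemidirectProduct.ext_iff.symm

/-- Signed permutations of the coordinates, i.e. the hyperoctahedral group: `(δ, σ)` acts on a
vector by permuting its entries by `σ` and then multiplying them by the signs `δ`. -/
abbrev SignedPerm (ι : Type*) := (ι → ℤˣ) ⋊[mulAutArrow (G := Perm ι) (A := ι)] Perm ι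

variable {ι : Type*}

namespace SignedPerm

instance : DistribMulAction (SignedPerm ι) (ι → ℤ) where
  smul g x i := g.left i * x (g.right.symm i)
  one_smul x := by ext i; exact one_mul (x i)
  mul_smul g h x := by ext i; exact mul_assoc (g.left i : ℤ) (h.left _) _
  smul_zero g := by ext i; exact mul_zero _
  smul_add g x y := by ext i; exact mul_add _ _ _

theorem smul_apply (g : SignedPerm ι) (x : ι → ℤ) (i : ι) :
    (g • x) i = g.left i * x (g.right.symm i) := rfl

theorem inr_mul_inl_mulSingle_mul_inr_inv [DecidableEq ι] (σ : Perm ι) (i : ι) (u : ℤˣ) :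
    (inr σ * inl (Pi.mulSingle i u) * inr σ⁻¹ : SignedPerm ι) = inl (Pi.mulSingle (σ i) u) := by
  rw [← inl_aut]
  congr 1
  ext j
  change ((Pi.mulSingle i u : ι → ℤˣ) (σ.symm j) : ℤ) = (Pi.mulSingle (σ i) u : ι → ℤˣ) j
  simp only [Pi.mulSingle_apply, symm_apply_eq]

theorem eq_top_of_inr_mem_of_inl_mulSingle_mem [Finite ι] [DecidableEq ι]
    {H : Subgroup (SignedPerm ι)} (hperm : ∀ σ, inr σ ∈ H) {i : ι}
    (hsign : inl (Pi.mulSingle i (-1)) ∈ H) : H = ⊤ := by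
  have hsingle (j : ι) (u : ℤˣ) : inl (Pi.mulSingle j u) ∈ H := by
    rcases Int.units_eq_one_or u with rfl | rfl
    · simp [one_mem]
    · rw [← swap_apply_left i j, ← inr_mul_inl_mulSingle_mul_inr_inv]
      exact mul_mem (mul_mem (hperm _) hsign) (hperm _)
  have hsigns (δ : ι → ℤˣ) : δ ∈ H.comap inl :=
    Subgroup.pi_mem_of_mulSingle_mem δ fun j => hsingle j (δ j)
  refine (Subgroup.eq_top_iff' H).2 fun g => ?_
  rw [← inl_left_mul_inr_right g]
  exact mul_mem (hsigns g.left) (hperm g.right)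

end SignedPerm

/-- A lattice is invariant if it is stable under all signed permutations of the coordinates. -/
def IsSignedPermInvariant (L : AddSubgroup (ι → ℤ)) : Prop :=
  ∀ g : SignedPerm ι, ∀ x ∈ L, g • x ∈ L

theorem IsSignedPermInvariant.eq_top_of_single_mem [Finite ι] [DecidableEq ι]
    {L : AddSubgroup (ι → ℤ)} (hL : IsSignedPermInvariant L) {i : ι} (hi : Pi.single i 1 ∈ L) :
    L = ⊤ := by
  have hsingle (j : ι) : Pi.single j 1 ∈ L := by
    convert hL (inr (swap i j)) _ hi using 1
    ext k
    simp [SignedPerm.smul_apply, Pi.single_apply, swap_apply_eq_iff]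
  refine (AddSubgroup.eq_top_iff' L).2 fun x => AddSubgroup.pi_mem_of_single_mem x fun j => ?_
  have hxj : Pi.single j (x j) = x j • (Pi.single j 1 : ι → ℤ) := by
    rw [← Pi.single_smul, smul_eq_mul, mul_one]
  rw [hxj]
  exact zsmul_mem (hsingle j) _

theorem IsSignedPermInvariant.two_smul {L : AddSubgroup (ι → ℤ)} (hL : IsSignedPermInvariant L) :
    IsSignedPermInvariant ((2 : ℤ) • L) := by
  rintro g _ ⟨x, hx, rfl⟩
  exact ⟨g • x, hL g x hx, (map_zsmul (DistribSMul.toAddMonoidHom _ g) 2 x).symm⟩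

theorem relIndex_two_smul (L M : AddSubgroup (ι → ℤ)) :
    ((2 : ℤ) • L).relIndex ((2 : ℤ) • M) = L.relIndex M :=
  AddSubgroup.relIndex_map_map_of_injective L M (smul_right_injective _ two_ne_zero)

/-- The action of the signed permutations on the multiplicative copy of `ℤ^ι`. -/
def SignedPerm.toMulAut (ι : Type*) : SignedPerm ι →* MulAut (Multiplicative (ι → ℤ)) where
  toFun g := (DistribMulAction.toAddEquiv (ι → ℤ) g).toMultiplicative
  map_one' := by ext x : 1; exact one_smul (SignedPerm ι) (toAdd x)
  map_mul' g h := by ext x : 1; exact mul_smul g h (toAdd x)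

/-- The group of affine maps `x ↦ g • x + t` of `ℤ^ι` with `g` a signed permutation, encoded as
the pairs `(t, g)`. -/
abbrev SignedAffine (ι : Type*) :=
  Multiplicative (ι → ℤ) ⋊[SignedPerm.toMulAut ι] SignedPerm ι

namespace SignedAffine

theorem conj_inl (g : SignedAffine ι) (x : ι → ℤ) :
    g * inl (ofAdd x) * g⁻¹ = inl (ofAdd (g.right • x)) := by
  rw [mul_inv_eq_iff_eq_mul]
  ext : 1
  · rw [mul_left, mul_left, left_inl, left_inl, right_inl, map_one, mul_comm]
    rfl
  · simp

/-- The group of translations by the vectors of a lattice. -/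
def translations (L : AddSubgroup (ι → ℤ)) : Subgroup (SignedAffine ι) :=
  L.toSubgroup.map inl

theorem inl_mem_translations {L : AddSubgroup (ι → ℤ)} {x : ι → ℤ} :
    inl (ofAdd x) ∈ translations L ↔ x ∈ L := by
  exact Subgroup.mem_map_iff_mem inl_injective

theorem translations_le_ker_rightHom (L : AddSubgroup (ι → ℤ)) :
    translations L ≤ (rightHom : SignedAffine ι →* SignedPerm ι).ker := by
  rw [← range_inl_eq_ker_rightHom]
  exact Subgroup.map_le_range _ _

theorem translations_mono {L M : AddSubgroup (ι → ℤ)} (h : L ≤ M) :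
    translations L ≤ translations M :=
  Subgroup.map_mono h

theorem relIndex_translations (L M : AddSubgroup (ι → ℤ)) :
    (translations L).relIndex (translations M) = L.relIndex M := by
  rw [translations, translations, Subgroup.relIndex_map_map_of_injective _ _ inl_injective,
    AddSubgroup.relIndex_toSubgroup]

theorem normal_translations {L : AddSubgroup (ι → ℤ)} (hL : IsSignedPermInvariant L) :
    (translations L).Normal where
  conj_mem := by
    rintro _ ⟨x, hx, rfl⟩ g
    rw [← ofAdd_toAdd x, conj_inl]
    exact inl_mem_translations.2 (hL _ _ hx)

theorem negOnePow_units_mul (u : ℤˣ) (n : ℤ) : (u * n).negOnePow = n.negOnePow := by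
  rcases Int.units_eq_one_or u with rfl | rfl <;> simp [Int.negOnePow_neg]

/-- The affine maps whose sign pattern, up to a common sign, is given by the parities of the
translation part. It is the invariant that forces the translations in `crystalGroup` to be even. -/
def paritySubgroup (ι : Type*) [Fintype ι] : Subgroup (SignedAffine ι) where
  carrier := {g | ∀ i, (toAdd g.left i).negOnePow = g.right.left i * ∏ j, g.right.left j}
  one_mem' i := by simp
  mul_mem' {g h} hg hh i := by
    have hprod : ∏ j, h.right.left (g.right.right.symm j) = ∏ j, h.right.left j :=
      Equiv.prod_comp g.right.right.symm h.right.left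
    change (toAdd g.left i + g.right.left i * toAdd h.left (g.right.right.symm i)).negOnePow =
      g.right.left i * h.right.left (g.right.right.symm i) *
        ∏ j, g.right.left j * h.right.left (g.right.right.symm j)
    rw [Int.negOnePow_add, negOnePow_units_mul, hg i, hh, Finset.prod_mul_distrib, hprod,
      mul_mul_mul_comm]
  inv_mem' {g} hg i := by
    have hprod : ∏ j, g.right.left (g.right.right j) = ∏ j, g.right.left j :=
      Equiv.prod_comp g.right.right g.right.left
    change (((g.right.left (g.right.right i))⁻¹ : ℤˣ) * -toAdd g.left (g.right.right i)).negOnePow =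
      (g.right.left (g.right.right i))⁻¹ * ∏ j, (g.right.left (g.right.right j))⁻¹
    simp only [Int.units_inv_eq_self, negOnePow_units_mul, Int.negOnePow_neg, hprod]
    exact hg _

theorem paritySubgroup_inf_ker_rightHom_le [Fintype ι] :
    paritySubgroup ι ⊓ (rightHom : SignedAffine ι →* SignedPerm ι).ker ≤
      translations ((2 : ℤ) • ⊤) := by
  rintro g ⟨hpar, hker⟩
  obtain ⟨t, rfl⟩ : g ∈ (inl : _ →* SignedAffine ι).range := by rwa [range_inl_eq_ker_rightHom]
  have heven : ∀ i, Even (toAdd t i) := fun i => by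
    simpa [Int.negOnePow_eq_one_iff] using hpar i
  choose y hy using heven
  exact inl_mem_translations.2 ⟨y, trivial, by ext i; exact (two_mul (y i)).trans (hy i).symm⟩

/-- The affine map `x ↦ (-x₀, -x₂, -x₁)`. -/
def gen0 : SignedAffine (Fin 3) := ⟨1, -1, swap 1 2⟩

/-- The affine map `x ↦ (x₁, x₀, x₂)`. -/
def gen1 : SignedAffine (Fin 3) := ⟨1, 1, swap 0 1⟩

/-- The affine map `x ↦ (-x₀, x₂ + 1, x₁ - 1)`. -/
def gen2 : SignedAffine (Fin 3) := ⟨ofAdd ![0, 1, -1], ![-1, 1, 1], swap 1 2⟩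

theorem gen0_mul_gen0 : gen0 * gen0 = 1 := by decide

theorem gen1_mul_gen1 : gen1 * gen1 = 1 := by decide

theorem gen2_mul_gen2 : gen2 * gen2 = 1 := by decide

/-- The crystallographic group generated by `gen0`, `gen1` and `gen2`. -/
def crystalGroup : Subgroup (SignedAffine (Fin 3)) := Subgroup.closure {gen0, gen1, gen2}

theorem gen0_mem_crystalGroup : gen0 ∈ crystalGroup := Subgroup.subset_closure (by simp)

theorem gen1_mem_crystalGroup : gen1 ∈ crystalGroup := Subgroup.subset_closure (by simp)

theorem gen2_mem_crystalGroup : gen2 ∈ crystalGroup := Subgroup.subset_closure (by simp)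

theorem map_rightHom_crystalGroup : crystalGroup.map rightHom = ⊤ := by
  have hmem {g : SignedAffine (Fin 3)} (hg : g ∈ crystalGroup) :
      g.right ∈ crystalGroup.map rightHom := Subgroup.mem_map_of_mem rightHom hg
  have h0 := hmem gen0_mem_crystalGroup
  have h1 := hmem gen1_mem_crystalGroup
  have h2 := hmem gen2_mem_crystalGroup
  have hswap12 : inr (swap 1 2) = (gen0.right * gen1.right) ^ 3 * gen0.right := by decide
  have hswap : Set.range (fun i : Fin 2 => swap i.castSucc i.succ) ⊆
      ((crystalGroup.map rightHom).comap inr : Subgroup (Perm (Fin 3))) := by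
    rintro _ ⟨i, rfl⟩
    fin_cases i
    · exact h1
    · change inr (swap 1 2) ∈ crystalGroup.map rightHom
      exact hswap12 ▸ mul_mem (pow_mem (mul_mem h0 h1) 3) h0
  have hperm : ∀ σ, inr σ ∈ crystalGroup.map rightHom := fun σ =>
    Submonoid.closure_le.2 hswap (Perm.mclosure_swap_castSucc_succ 2 ▸ Submonoid.mem_top σ)
  have hsign : inl (Pi.mulSingle 0 (-1)) = gen2.right * inr (swap 1 2) := by decide
  exact SignedPerm.eq_top_of_inr_mem_of_inl_mulSingle_mem hperm
    (hsign ▸ mul_mem h2 (hperm (swap 1 2)))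

theorem gen_cubes_mul :
    (gen0 * gen1) ^ 3 * (gen1 * gen2) ^ 3 = inl (ofAdd ((2 : ℤ) • Pi.single 2 1)) := by
  decide +kernel

theorem translations_two_smul_top_le_crystalGroup :
    translations ((2 : ℤ) • ⊤) ≤ crystalGroup := by
  let L : AddSubgroup (Fin 3 → ℤ) :=
    (Subgroup.toAddSubgroup' (crystalGroup.comap inl)).comap (DistribSMul.toAddMonoidHom _ (2 : ℤ))
  have mem_L {x : Fin 3 → ℤ} : x ∈ L ↔ inl (ofAdd ((2 : ℤ) • x)) ∈ crystalGroup := Iff.rfl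
  have hinv : IsSignedPermInvariant L := fun g x hx => by
    obtain ⟨h, hh, rfl⟩ : g ∈ crystalGroup.map rightHom :=
      map_rightHom_crystalGroup ▸ Subgroup.mem_top g
    rw [mem_L, smul_comm, rightHom_eq_right, ← conj_inl]
    exact mul_mem (mul_mem hh (mem_L.1 hx)) (inv_mem hh)
  have htop : L = ⊤ := by
    refine hinv.eq_top_of_single_mem (i := 2) ?_
    rw [mem_L, ← gen_cubes_mul]
    exact mul_mem (pow_mem (mul_mem gen0_mem_crystalGroup gen1_mem_crystalGroup) 3)
      (pow_mem (mul_mem gen1_mem_crystalGroup gen2_mem_crystalGroup) 3)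
  rintro _ ⟨_, ⟨x, -, rfl⟩, rfl⟩
  exact mem_L.1 (htop ▸ AddSubgroup.mem_top x)

theorem crystalGroup_le_paritySubgroup : crystalGroup ≤ paritySubgroup (Fin 3) := by
  rw [crystalGroup, Subgroup.closure_le]
  rintro _ (rfl | rfl | rfl) i <;> revert i <;> decide

theorem ker_rightHom_inf_crystalGroup :
    (rightHom : SignedAffine (Fin 3) →* SignedPerm (Fin 3)).ker ⊓ crystalGroup =
      translations ((2 : ℤ) • ⊤) := by
  refine le_antisymm ?_ (le_inf (translations_le_ker_rightHom _)
    translations_two_smul_top_le_crystalGroup)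
  rw [inf_comm]
  exact (inf_le_inf_right _ crystalGroup_le_paritySubgroup).trans paritySubgroup_inf_ker_rightHom_le

theorem relIndex_translations_two_smul_crystalGroup (L : AddSubgroup (Fin 3 → ℤ)) :
    (translations ((2 : ℤ) • L)).relIndex crystalGroup = 48 * L.index := by
  have hpoint : (translations ((2 : ℤ) • ⊤)).relIndex crystalGroup = 48 := by
    rw [← ker_rightHom_inf_crystalGroup, Subgroup.inf_relIndex_right, Subgroup.relIndex_ker,
      map_rightHom_crystalGroup, Subgroup.card_top, SemidirectProduct.card]
    simp [Fintype.card_perm, Nat.factorial]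
  have hle : translations ((2 : ℤ) • L) ≤ translations ((2 : ℤ) • ⊤) :=
    translations_mono (AddSubgroup.map_mono le_top)
  rw [← Subgroup.relIndex_mul_relIndex _ _ _ hle translations_two_smul_top_le_crystalGroup,
    relIndex_translations, relIndex_two_smul, AddSubgroup.relIndex_top_right, hpoint, mul_comm]

section Quotient

variable {ι : Type*} (M : AddSubgroup (ι → ℤ)) [(translations M).Normal]

/-- The linear part of an affine map, well defined modulo translations. -/
def linearPart : SignedAffine ι ⧸ translations M →* SignedPerm ι :=
  QuotientGroup.lift _ rightHom (translations_le_ker_rightHom M)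

theorem linearPart_mk (g : SignedAffine ι) :
    linearPart M (QuotientGroup.mk' (translations M) g) = g.right := rfl

variable {M}

theorem orderOf_mk_eq {g : SignedAffine ι} {n : ℕ} (hn : 0 < n) (hg : g ^ n = 1)
    (hright : ∀ m < n, 0 < m → g.right ^ m ≠ 1) :
    orderOf (QuotientGroup.mk' (translations M) g) = n := by
  have hlinear : g.right ^ n = 1 := by rw [← rightHom_eq_right, ← map_pow, hg, map_one]
  exact orderOf_eq_of_orderOf_map (f := linearPart M) (congrArg _ hg)
    ((orderOf_eq_iff hn).2 ⟨hlinear, hright⟩)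

end Quotient

section Generators

variable {M : AddSubgroup (Fin 3 → ℤ)} [(translations M).Normal]

local notation "π" => QuotientGroup.mk' (translations M)

theorem card_closure_mk_gens :
    Nat.card (Subgroup.closure {π gen0, π gen1, π gen2}) =
      (translations M).relIndex crystalGroup := by
  have hmap : Subgroup.closure {π gen0, π gen1, π gen2} = crystalGroup.map π := by
    simp only [crystalGroup, MonoidHom.map_closure, Set.image_insert_eq, Set.image_singleton]
  rw [hmap, ← Subgroup.relIndex_ker, QuotientGroup.ker_mk']

theorem closure_gen0_gen1_inf_closure_gen0_gen2_le :
    Subgroup.closure {π gen0, π gen1} ⊓ Subgroup.closure {π gen0, π gen2} ≤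
      Subgroup.closure {π gen0} := by
  have linear_case : ∀ (i : Fin 6) (j d e : Fin 2),
      (gen0.right * gen1.right) ^ i.val * gen0.right ^ d.val =
        (gen0.right * gen2.right) ^ j.val * gen0.right ^ e.val → i = 0 := by
    decide +kernel
  exact closure_pair_inf_closure_pair_le (k := 6) (l := 2) (congrArg π gen0_mul_gen0)
    (congrArg π gen1_mul_gen1) (congrArg π gen2_mul_gen2)
    (congrArg π (by decide +kernel : (gen0 * gen1) ^ 6 = 1))
    (congrArg π (by decide +kernel : (gen0 * gen2) ^ 2 = 1))
    fun i j d e h => linear_case i j d e <| by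
      simpa only [map_mul, map_pow, linearPart_mk] using congrArg (linearPart M) h

theorem closure_gen2_gen0_inf_closure_gen2_gen1_le :
    Subgroup.closure {π gen2, π gen0} ⊓ Subgroup.closure {π gen2, π gen1} ≤
      Subgroup.closure {π gen2} := by
  have linear_case : ∀ (i : Fin 2) (j : Fin 6) (d e : Fin 2),
      (gen2.right * gen0.right) ^ i.val * gen2.right ^ d.val =
        (gen2.right * gen1.right) ^ j.val * gen2.right ^ e.val → i = 0 := by
    decide +kernel
  exact closure_pair_inf_closure_pair_le (k := 2) (l := 6) (congrArg π gen2_mul_gen2)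
    (congrArg π gen0_mul_gen0) (congrArg π gen1_mul_gen1)
    (congrArg π (by decide +kernel : (gen2 * gen0) ^ 2 = 1))
    (congrArg π (by decide +kernel : (gen2 * gen1) ^ 6 = 1))
    fun i j d e h => linear_case i j d e <| by
      simpa only [map_mul, map_pow, linearPart_mk] using congrArg (linearPart M) h

theorem closure_gen1_gen0_inf_closure_gen1_gen2_le (hM : (2 : ℤ) • Pi.single 2 1 ∉ M) :
    Subgroup.closure {π gen1, π gen0} ⊓ Subgroup.closure {π gen1, π gen2} ≤
      Subgroup.closure {π gen1} := by
  have linear_case : ∀ (i j : Fin 6) (d e : Fin 2),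
      (gen1.right * gen0.right) ^ i.val * gen1.right ^ d.val =
        (gen1.right * gen2.right) ^ j.val * gen1.right ^ e.val →
      i = 0 ∨ i = 3 ∧ j = 3 ∧ d = e := by
    decide +kernel
  refine closure_pair_inf_closure_pair_le (k := 6) (l := 6) (congrArg π gen1_mul_gen1)
    (congrArg π gen0_mul_gen0) (congrArg π gen2_mul_gen2)
    (congrArg π (by decide +kernel : (gen1 * gen0) ^ 6 = 1))
    (congrArg π (by decide +kernel : (gen1 * gen2) ^ 6 = 1)) fun i j d e h => ?_
  have hlinear := congrArg (linearPart M) h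
  simp only [map_mul, map_pow, linearPart_mk] at hlinear
  rcases linear_case i j d e hlinear with hi | ⟨rfl, rfl, rfl⟩
  · exact hi
  · have hcubes : ((gen1 * gen0) ^ 3)⁻¹ * (gen1 * gen2) ^ 3 ∈ translations M :=
      QuotientGroup.eq.1 (mul_right_cancel h)
    have hinv : ((gen1 * gen0) ^ 3)⁻¹ = (gen0 * gen1) ^ 3 := by decide +kernel
    rw [hinv, gen_cubes_mul] at hcubes
    exact absurd (inl_mem_translations.1 hcubes) hM

theorem interProp_mk_gens (hM : (2 : ℤ) • Pi.single 2 1 ∉ M) :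
    InterProp ![π gen0, π gen1, π gen2] := by
  have pair_cases : ∀ i j k : Fin 3, i < j → i ≠ k → j ≠ k →
      i = 1 ∧ j = 2 ∧ k = 0 ∨ i = 0 ∧ j = 2 ∧ k = 1 ∨ i = 0 ∧ j = 1 ∧ k = 2 := by decide
  refine interProp_of_forall_lt (fun i j k hij hik hjk => ?_) fun i j hij => ?_
  · rcases pair_cases i j k hij hik hjk with ⟨rfl, rfl, rfl⟩ | ⟨rfl, rfl, rfl⟩ | ⟨rfl, rfl, rfl⟩
    · exact closure_gen0_gen1_inf_closure_gen0_gen2_le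
    · exact closure_gen1_gen0_inf_closure_gen1_gen2_le hM
    · exact closure_gen2_gen0_inf_closure_gen2_gen1_le
  · refine closure_singleton_inf_closure_singleton_le_bot ?_ ?_ ?_
    · fin_cases i
      exacts [congrArg π gen0_mul_gen0, congrArg π gen1_mul_gen1, congrArg π gen2_mul_gen2]
    · fin_cases j
      exacts [congrArg π gen0_mul_gen0, congrArg π gen1_mul_gen1, congrArg π gen2_mul_gen2]
    · have hne : ∀ i j : Fin 3, i ≠ j →
          ![gen0.right, gen1.right, gen2.right] i ≠ ![gen0.right, gen1.right, gen2.right] j := by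
        decide
      refine fun h => hne i j hij ?_
      convert congrArg (linearPart M) h using 1
      · fin_cases i <;> rfl
      · fin_cases j <;> rfl

theorem exists_isType66StringC_of_isSignedPermInvariant {L : AddSubgroup (Fin 3 → ℤ)} {n : ℕ}
    (hL : IsSignedPermInvariant L) (hne : L ≠ ⊤) (hindex : 48 * L.index = 3 * 2 ^ n) :
    ∃ (G : Type) (inst : Group G) (ρ0 ρ1 ρ2 : G),
      Finite G ∧ @IsType66StringC n G inst ρ0 ρ1 ρ2 := by
  have := normal_translations hL.two_smul
  have hM : (2 : ℤ) • Pi.single 2 1 ∉ (2 : ℤ) • L := by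
    rintro ⟨x, hx, hx'⟩
    obtain rfl : x = Pi.single 2 1 := smul_right_injective _ two_ne_zero hx'
    exact hne (hL.eq_top_of_single_mem hx)
  refine exists_isType66StringC_of_closure
    ((card_closure_mk_gens.trans (relIndex_translations_two_smul_crystalGroup L)).trans hindex)
    ?_ ?_ ?_ ?_ ?_ ?_ (interProp_mk_gens hM)
  · exact orderOf_mk_eq (by decide) (by decide +kernel) (by decide +kernel)
  · exact orderOf_mk_eq (by decide) (by decide +kernel) (by decide +kernel)
  · exact orderOf_mk_eq (by decide) (by decide +kernel) (by decide +kernel)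
  · exact orderOf_mk_eq (g := gen0 * gen2) (by decide) (by decide +kernel) (by decide +kernel)
  · exact orderOf_mk_eq (g := gen0 * gen1) (by decide) (by decide +kernel) (by decide +kernel)
  · exact orderOf_mk_eq (g := gen1 * gen2) (by decide) (by decide +kernel) (by decide +kernel)

end Generators

end SignedAffine

end SignedAffine

section CubicLattices

variable {ι : Type*}

/-- Reduction of integer vectors modulo two. The lattices below are preimages of binary codes under
this map. -/
def reduceModTwo (ι : Type*) : (ι → ℤ) →+ (ι → ZMod 2) :=
  (Int.castAddHom (ZMod 2)).compLeft ι

theorem reduceModTwo_surjective : Function.Surjective (reduceModTwo ι) :=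
  (ZMod.intCast_surjective (n := 2)).comp_left

theorem reduceModTwo_smul (g : SignedPerm ι) (x : ι → ℤ) :
    reduceModTwo ι (g • x) = reduceModTwo ι x ∘ g.right.symm := by
  ext i
  change ((g.left i * x (g.right.symm i) : ℤ) : ZMod 2) = (x (g.right.symm i) : ZMod 2)
  rcases Int.units_eq_one_or (g.left i) with h | h <;> simp [h, ZMod.neg_eq_self_mod_two]

theorem isSignedPermInvariant_comap_reduceModTwo {C : AddSubgroup (ι → ZMod 2)}
    (hC : ∀ σ : Perm ι, ∀ c ∈ C, c ∘ σ ∈ C) :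
    IsSignedPermInvariant (C.comap (reduceModTwo ι)) := fun g x hx => by
  rw [AddSubgroup.mem_comap, reduceModTwo_smul]
  exact hC _ _ hx

theorem index_comap_reduceModTwo (C : AddSubgroup (ι → ZMod 2)) :
    (C.comap (reduceModTwo ι)).index = C.index :=
  C.index_comap_of_surjective reduceModTwo_surjective

theorem ker_reduceModTwo : (reduceModTwo ι).ker = (2 : ℤ) • ⊤ := by
  ext x
  constructor
  · intro hx
    have heven : ∀ i, (2 : ℤ) ∣ x i := fun i =>
      (ZMod.intCast_zmod_eq_zero_iff_dvd (x i) 2).1 (congrFun hx i)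
    choose y hy using heven
    exact ⟨y, trivial, (funext hy).symm⟩
  · rintro ⟨y, -, rfl⟩
    ext i
    exact (ZMod.intCast_zmod_eq_zero_iff_dvd _ 2).2 (dvd_mul_right 2 (y i))

theorem index_two_smul_top [Finite ι] :
    ((2 : ℤ) • (⊤ : AddSubgroup (ι → ℤ))).index = 2 ^ Nat.card ι := by
  rw [← ker_reduceModTwo, AddSubgroup.index_ker,
    AddMonoidHom.range_eq_top.2 reduceModTwo_surjective, AddSubgroup.card_top, Nat.card_fun]
  simp

theorem index_two_smul [Finite ι] (L : AddSubgroup (ι → ℤ)) :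
    ((2 : ℤ) • L).index = 2 ^ Nat.card ι * L.index := by
  have hle : (2 : ℤ) • L ≤ (2 : ℤ) • ⊤ := AddSubgroup.map_mono le_top
  rw [← AddSubgroup.relIndex_mul_index hle, relIndex_two_smul, AddSubgroup.relIndex_top_right,
    index_two_smul_top, mul_comm]

/-- The binary code of the words of even weight. -/
def evenWeightCode (ι : Type*) [Fintype ι] : AddSubgroup (ι → ZMod 2) :=
  (∑ i, Pi.evalAddMonoidHom (fun _ : ι => ZMod 2) i).ker

theorem mem_evenWeightCode [Fintype ι] {c : ι → ZMod 2} : c ∈ evenWeightCode ι ↔ ∑ i, c i = 0 := by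
  simp [evenWeightCode, AddMonoidHom.mem_ker]

theorem index_evenWeightCode [Fintype ι] [Nonempty ι] : (evenWeightCode ι).index = 2 := by
  classical
  have hsurj : Function.Surjective ⇑(∑ i, Pi.evalAddMonoidHom (fun _ : ι => ZMod 2) i) := fun a =>
    ⟨Pi.single (Classical.arbitrary ι) a, by simp⟩
  rw [evenWeightCode, AddSubgroup.index_ker, AddMonoidHom.range_eq_top.2 hsurj,
    AddSubgroup.card_top, Nat.card_zmod]

/-- The binary code of the constant words. -/
def repetitionCode (ι : Type*) : AddSubgroup (ι → ZMod 2) :=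
  AddSubgroup.zmultiples 1

theorem index_repetitionCode (n : ℕ) : (repetitionCode (Fin (n + 1))).index = 2 ^ n := by
  have hcard : Nat.card (repetitionCode (Fin (n + 1))) = 2 := by
    rw [repetitionCode, Nat.card_zmultiples]
    exact addOrderOf_eq_prime (funext fun _ => CharTwo.two_nsmul (1 : ZMod 2)) one_ne_zero
  have hmul := (repetitionCode (Fin (n + 1))).card_mul_index
  rw [hcard, Nat.card_fun, Nat.card_zmod, Nat.card_fin, pow_succ'] at hmul
  exact Nat.eq_of_mul_eq_mul_left two_pos hmul

/-- The chain of cubic lattices in `ℤ³`: primitive, face-centred, body-centred, and then the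
doubles of these, indefinitely. -/
def cubicLattice : ℕ → AddSubgroup (Fin 3 → ℤ)
  | 0 => ⊤
  | 1 => (evenWeightCode (Fin 3)).comap (reduceModTwo (Fin 3))
  | 2 => (repetitionCode (Fin 3)).comap (reduceModTwo (Fin 3))
  | n + 3 => (2 : ℤ) • cubicLattice n

theorem index_cubicLattice (n : ℕ) : (cubicLattice n).index = 2 ^ n := by
  induction n using cubicLattice.induct with
  | case1 => exact AddSubgroup.index_top
  | case2 => exact (index_comap_reduceModTwo _).trans index_evenWeightCode
  | case3 => exact (index_comap_reduceModTwo _).trans (index_repetitionCode 2)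
  | case4 n ih => rw [cubicLattice, index_two_smul, ih, Nat.card_fin, ← pow_add, add_comm]

theorem isSignedPermInvariant_cubicLattice (n : ℕ) : IsSignedPermInvariant (cubicLattice n) := by
  induction n using cubicLattice.induct with
  | case1 => exact fun _ _ _ => trivial
  | case2 =>
    refine isSignedPermInvariant_comap_reduceModTwo fun σ c hc => ?_
    rw [mem_evenWeightCode] at hc ⊢
    exact (Equiv.sum_comp σ c).trans hc
  | case3 =>
    refine isSignedPermInvariant_comap_reduceModTwo ?_
    rintro σ _ ⟨k, rfl⟩
    exact ⟨k, rfl⟩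
  | case4 n ih => exact ih.two_smul

end CubicLattices

/-- Corollary 5.2: for every `n ≥ 5` there is a regular 3-polytope of order `3 · 2^n`
with Schläfli type `{6, 6}`. -/
theorem stmt_15 (n : ℕ) (hn : 5 ≤ n) :
    ∃ (G : Type) (inst : Group G) (ρ0 ρ1 ρ2 : G),
      Finite G ∧ @IsType66StringC n G inst ρ0 ρ1 ρ2 := by
  obtain ⟨k, rfl⟩ := Nat.exists_eq_add_of_le hn
  have hindex := index_cubicLattice (k + 1)
  have hne : cubicLattice (k + 1) ≠ ⊤ := fun htop => by
    rw [htop, AddSubgroup.index_top] at hindex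
    exact (Nat.one_lt_two_pow k.succ_ne_zero).ne hindex
  refine SignedAffine.exists_isType66StringC_of_isSignedPermInvariant
    (isSignedPermInvariant_cubicLattice (k + 1)) hne ?_
  rw [hindex]
  ring
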